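/- Let n ≥ 2 and let K = ℂ(x_1,…,x_n) be the function field of ℙ^n. Let q = ⟨1, a_1, a_2, …, a_r⟩ be a quadratic form over K with a_i ∈ K^*, and suppose a_1 = f/g with f, g ∈ ℂ[x_1,…,x_n] satisfying one of the following: (1) f and g are linear; (2) f and g have degree at most two and the homogenization (with respect to x_0,…,x_n) of g z² − f, regarded over L = ℂ(z), is a quadratic form of rank ≥ 3 over L. Then the projective quadric hypersurface Q defined by q is unirational over ℂ; more precisely, some degree two field extension of the function field K(Q) is purely transcendental over ℂ. -/

import Mathlib

/-!
Write `K = ℂ(x₁,…,xₙ)` and let `F = K(Q)`, generated over `K` by `z₁,…,z_r` subject to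
`1 + ∑ aᵢ zᵢ² = 0`. The function field becomes purely transcendental as soon as it contains a
square root `ζ` of `a₁ = f/g`.

No isomorphism is written down by hand. The transcendence degree of `F` over `ℂ` is at least
`n + r - 1`, because `z₂,…,z_r` are algebraically independent over `K`
(`algebraicIndependent_quotient`). Hence an algebraic extension of `F` that is generated over `ℂ` by
`n + r - 1` elements is generated by an algebraically independent family
(`algebraicIndependent_of_generates`), so it is purely transcendental. It remains to count
generators.

* The field `ℂ(x₁,…,xₙ,ζ)` is generated by `n` elements (`generators_of_sqrt`). This is clear if
  `ζ ∈ ℂ`; otherwise `ζ` is transcendental and `ζ² g(x) = f(x)` is an equation for `x` over `ℂ(ζ)`.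
  If `f` and `g` are linear, so is this equation, and one of the `xᵢ` can be eliminated. If they are
  quadratic, the point `(1 : x)` lies on a quadric of rank at least three over `ℂ(ζ)`. Conics over
  `ℂ(z)` have points (Tsen; proved here by Legendre descent in `Polynomial.conic_poly`), so
  the quadric has a rational point outside the vertex (`exists_isotropic`), and projection from
  that point parametrises the quadric (`generators_of_quadric`).
* Over a field containing `ζ`, choose `η` with `η² = -a₁` and put `u = 1 + η z₁`. Then
  `1 + a₁ z₁² = u (2 - u)`, so with `tᵢ = zᵢ / u` for `i ≥ 2` the equation of the quadric becomes
  `u (1 - ∑_{i ≥ 2} aᵢ tᵢ²) = 2`, and `z₁,…,z_r` are rational in the `tᵢ` over `K(ζ)`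
  (`exists_generators`).

If `a₁` is not a square in `F`, the quadratic extension `F(√a₁)` is the one sought. If `a₁` is
already a square in `F`, then `F` itself is purely transcendental, and adjoining the square root of
one of its free generators gives a purely transcendental quadratic extension
(`exists_sqrt_generator`).
-/


set_option synthInstance.maxHeartbeats 1000000
set_option maxHeartbeats 1000000

noncomputable section
open MvPolynomial

/-- The rational function field `ℂ(x₁,…,xₙ) = ℂ(ℙⁿ)`. -/
abbrev RatFF (d : ℕ) : Type := FractionRing (MvPolynomial (Fin d) ℂ)

/-- The coordinate ring of the affine chart `{z₀ = 1}` of the projective quadric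
`Q = {z₀² + a₁ z₁² + ⋯ + a_r z_r² = 0} ⊂ ℙ^r_K` over `K = ℂ(x₁,…,xₙ)` determined by the
quadratic form `q = ⟨1, a₁, …, a_r⟩`.  When `Q` is integral, the fraction field of this
ring is the function field `K(Q)`. -/
def quadricChartRing (n r : ℕ) (a : Fin r → RatFF n) : Type :=
  @HasQuotient.Quotient _ _ (Ideal.instHasQuotient (R := MvPolynomial (Fin r) (RatFF n)))
    (Ideal.span {(1 : MvPolynomial (Fin r) (RatFF n)) + ∑ i, C (a i) * X i ^ 2})

instance (n r : ℕ) (a : Fin r → RatFF n) : CommRing (quadricChartRing n r a) :=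
  Ideal.Quotient.commRing _
instance (n r : ℕ) (a : Fin r → RatFF n) : Algebra ℂ (quadricChartRing n r a) :=
  Ideal.Quotient.algebra ℂ

/-- The symmetric `(n+1) × (n+1)` matrix (over `ℂ`) of the homogenization (with respect to
the extra variable `x₀`) of a polynomial `f ∈ ℂ[x₁,…,xₙ]` of degree at most two, so that
the homogenization of `f` is the quadratic form `v ↦ vᵀ M v` in `v = (x₀, x₁, …, xₙ)`. -/
def homogMat {n : ℕ} (f : MvPolynomial (Fin n) ℂ) : Matrix (Fin (n+1)) (Fin (n+1)) ℂ :=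
  Matrix.of fun i j =>
    if hi : i = 0 then
      if hj : j = 0 then coeff 0 f
      else (1/2) * coeff (Finsupp.single (j.pred hj) 1) f
    else if hj : j = 0 then (1/2) * coeff (Finsupp.single (i.pred hi) 1) f
    else if i = j then coeff (Finsupp.single (i.pred hi) 2) f
    else (1/2) * coeff (Finsupp.single (i.pred hi) 1 + Finsupp.single (j.pred hj) 1) f

/-! ### Conics over `ℂ(X)` -/

namespace Polynomial

/-- Every polynomial is a square modulo a squarefree `b`: interpolate square roots of its values at
the roots of `b`. -/
lemma exists_sq_mod {b : ℂ[X]} (hb : Squarefree b) (a : ℂ[X]) :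
    ∃ c : ℂ[X], c.degree < b.degree ∧ b ∣ c ^ 2 - a := by
  classical
  have hb0 : b ≠ 0 := hb.ne_zero
  have hnd : b.roots.Nodup := nodup_roots (PerfectField.separable_iff_squarefree.mpr hb)
  have hcard : (b.roots.toFinset.card : WithBot ℕ) = b.degree := by
    rw [Multiset.toFinset_card_of_nodup hnd, (IsAlgClosed.splits b).degree_eq_card_roots hb0]
  choose s hs using fun r : ℂ => IsAlgClosed.exists_pow_nat_eq (a.eval r) (n := 2) (by norm_num)
  refine ⟨Lagrange.interpolate b.roots.toFinset id s, ?_, ?_⟩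
  · rw [← hcard]
    exact Lagrange.degree_interpolate_lt _ Function.injective_id.injOn
  · by_cases h0 : (Lagrange.interpolate b.roots.toFinset id s) ^ 2 - a = 0
    · rw [h0]; exact dvd_zero _
    refine (IsAlgClosed.splits b).dvd_of_roots_le_roots hb0 ?_
    rw [Multiset.le_iff_subset hnd]
    intro r hr
    rw [mem_roots h0, IsRoot, eval_sub, eval_pow]
    have := Lagrange.eval_interpolate_at_node (v := id) s Function.injective_id.injOn
      (Multiset.mem_toFinset.mpr hr)
    rw [id] at this
    rw [this, hs, sub_self]

/-- Legendre descent: every conic `x² = a y² + b z²` over `ℂ[X]` has a nontrivial solution, by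
induction on a bound `N` for the sum of the degrees of `a` and `b`. -/
lemma conic_poly (N : ℕ) : ∀ a b : ℂ[X], a ≠ 0 → b ≠ 0 → a.natDegree + b.natDegree ≤ N →
    ∃ x y z : ℂ[X], (x ≠ 0 ∨ y ≠ 0 ∨ z ≠ 0) ∧ x ^ 2 = a * y ^ 2 + b * z ^ 2 := by
  induction N using Nat.strong_induction_on with
  | _ N ih =>
  intro a b ha hb hN
  wlog hab : a.natDegree ≤ b.natDegree generalizing a b
  · obtain ⟨x, y, z, h, e⟩ := this b a hb ha (by omega) (by omega)
    exact ⟨x, z, y, by tauto, by rw [e]; ring⟩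
  by_cases hb1 : b.natDegree = 0
  · obtain ⟨β, hβ⟩ := natDegree_eq_zero.mp hb1
    obtain ⟨s, hs⟩ := IsAlgClosed.exists_pow_nat_eq β (n := 2) (by norm_num)
    refine ⟨C s, 0, 1, by simp, ?_⟩
    rw [← C_pow, hs, hβ]; ring
  by_cases hsq : Squarefree b
  · obtain ⟨c, hc, b', hb'⟩ := exists_sq_mod hsq a
    by_cases hca : c ^ 2 - a = 0
    · exact ⟨c, 1, 0, by simp, by linear_combination hca⟩
    have hb'0 : b' ≠ 0 := by rintro rfl; simp at hb'; exact hca hb'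
    have hdeg : b'.natDegree < b.natDegree := by
      have h1 : (b * b').natDegree = b.natDegree + b'.natDegree := natDegree_mul hb hb'0
      have h2 : (c ^ 2 - a).natDegree ≤ max (c ^ 2).natDegree a.natDegree := natDegree_sub_le _ _
      have h3 : c.natDegree < b.natDegree := by
        by_cases hc0 : c = 0
        · subst hc0; simp; omega
        · exact natDegree_lt_natDegree hc0 hc
      rw [natDegree_pow, hb', h1] at h2
      omega
    obtain ⟨x, y, z, h, e⟩ := ih (a.natDegree + b'.natDegree) (by omega) a b' ha hb'0 le_rfl
    -- `x + y √a` is multiplied by `c + √a`, whose norm `c² - a` is a multiple of `b`.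
    refine ⟨x * c + a * y, x + c * y, b' * z, ?_, ?_⟩
    · by_contra! hcon
      obtain ⟨h1, h2, h3⟩ := hcon
      have hz : z = 0 := (mul_eq_zero.mp h3).resolve_left hb'0
      have hy : y = 0 := by
        have : (c ^ 2 - a) * y = 0 := by linear_combination c * h2 - h1
        exact (mul_eq_zero.mp this).resolve_left hca
      have hx : x = 0 := by simpa [hy] using h2
      tauto
    · linear_combination (c ^ 2 - a) * e + b' * z ^ 2 * hb'
  · rw [squarefree_iff_no_irreducibles hb] at hsq
    push Not at hsq
    obtain ⟨d, hd, b', rfl⟩ := hsq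
    have hb'0 : b' ≠ 0 := right_ne_zero_of_mul hb
    have hdpos : 0 < d.natDegree := hd.natDegree_pos
    have hdeg : (d * d * b').natDegree = d.natDegree + d.natDegree + b'.natDegree := by
      rw [natDegree_mul (mul_ne_zero hd.ne_zero hd.ne_zero) hb'0, natDegree_mul hd.ne_zero hd.ne_zero]
    obtain ⟨x, y, z, h, e⟩ := ih (a.natDegree + b'.natDegree) (by omega) a b' ha hb'0 le_rfl
    refine ⟨d * x, d * y, z, ?_, by linear_combination d ^ 2 * e⟩
    have := hd.ne_zero
    simpa [this] using h

/-- Tsen's theorem for diagonal conics over `ℂ(X)`. -/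
lemma conic_ratFunc (a b c : RatFunc ℂ) (ha : a ≠ 0) (hb : b ≠ 0) (hc : c ≠ 0) :
    ∃ x y z : RatFunc ℂ, (x ≠ 0 ∨ y ≠ 0 ∨ z ≠ 0) ∧ a * x ^ 2 + b * y ^ 2 + c * z ^ 2 = 0 := by
  have key : ∀ u : RatFunc ℂ, u ≠ 0 → ∃ p : ℂ[X], ∃ q : RatFunc ℂ, p ≠ 0 ∧ q ≠ 0 ∧
      u * q ^ 2 = algebraMap _ _ p := by
    intro u hu
    have hd : algebraMap ℂ[X] (RatFunc ℂ) u.denom ≠ 0 := by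
      simpa using u.denom_ne_zero
    -- modulo squares, `u = num / denom` is the polynomial `num * denom`
    refine ⟨u.num * u.denom, algebraMap _ _ u.denom,
      mul_ne_zero (RatFunc.num_ne_zero hu) u.denom_ne_zero, hd, ?_⟩
    have h := RatFunc.num_div_denom u
    rw [div_eq_iff hd] at h
    rw [map_mul, h]
    ring
  obtain ⟨p, s, hp, hs, e1⟩ := key (-(b / a)) (by simp [ha, hb])
  obtain ⟨q, t, hq, ht, e2⟩ := key (-(c / a)) (by simp [ha, hc])
  obtain ⟨x, y, z, h, e⟩ := conic_poly _ p q hp hq le_rfl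
  refine ⟨algebraMap _ _ x, s * algebraMap _ _ y, t * algebraMap _ _ z, ?_, ?_⟩
  · simpa [hs, ht] using h
  · have e' := congrArg (algebraMap ℂ[X] (RatFunc ℂ)) e
    simp only [map_add, map_mul, map_pow, ← e1, ← e2] at e'
    field_simp at e'
    linear_combination e'

end Polynomial

/-! ### Isotropic vectors over `ℂ(z)` -/

/-- A quadratic form of rank at least three over `ℂ(z)` has an isotropic vector outside its radical:
in an orthogonal basis three diagonal entries are nonzero, and they define a conic. -/
lemma exists_isotropic {m : ℕ} (M : Matrix (Fin m) (Fin m) (RatFunc ℂ))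
    (hsymm : ∀ i j, M i j = M j i) (hrank : 3 ≤ M.rank) :
    ∃ v : Fin m → RatFunc ℂ, ∑ i, ∑ j, M i j * v i * v j = 0 ∧ M.mulVec v ≠ 0 := by
  classical
  have hB : ∀ u v : Fin m → RatFunc ℂ, Matrix.toBilin' M u v = u ⬝ᵥ M.mulVec v :=
    fun u v => Matrix.toBilin'_apply' M u v
  have hBsymm : LinearMap.IsSymm (Matrix.toBilin' M) := ⟨fun u v => by
    rw [RingHom.id_apply, hB, hB, Matrix.dotProduct_mulVec, ← Matrix.mulVec_transpose,
      show M.transpose = M from Matrix.ext fun i j => (hsymm j i), dotProduct_comm]⟩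
  have : Invertible (2 : RatFunc ℂ) := invertibleOfNonzero (by
    rw [← map_ofNat (algebraMap ℂ (RatFunc ℂ)) 2]
    exact (map_ne_zero _).mpr two_ne_zero)
  obtain ⟨b, hb⟩ := LinearMap.BilinForm.exists_orthogonal_basis hBsymm
  have hbo : ∀ i j, i ≠ j → b i ⬝ᵥ M.mulVec (b j) = 0 := fun i j hij => by
    rw [← hB]; exact hb hij
  let J := Finset.univ.filter fun i => b i ⬝ᵥ M.mulVec (b i) ≠ 0
  have hJ0 : ∀ i, i ∉ J → M.mulVec (b i) = 0 := by
    intro i hi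
    have hi' : b i ⬝ᵥ M.mulVec (b i) = 0 := by simpa [J] using hi
    have hall : ∀ u : Fin m → RatFunc ℂ, u ⬝ᵥ M.mulVec (b i) = 0 := by
      intro u
      rw [← b.sum_repr u, sum_dotProduct]
      refine Finset.sum_eq_zero fun j _ => ?_
      rw [smul_dotProduct]
      by_cases hij : j = i
      · rw [hij, hi', smul_zero]
      · rw [hbo j i hij, smul_zero]
    exact dotProduct_eq_zero _ (fun u => by rw [dotProduct_comm]; exact hall u)
  have hJ : 2 < J.card := by
    have hle : LinearMap.range M.mulVecLin ≤
        Submodule.span (RatFunc ℂ) (J.image fun i => M.mulVec (b i) : Finset (Fin m → RatFunc ℂ)) := by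
      rintro _ ⟨u, rfl⟩
      rw [← b.sum_repr u, map_sum]
      refine sum_mem fun i _ => ?_
      rw [map_smul, Matrix.mulVecLin_apply]
      refine Submodule.smul_mem _ _ ?_
      by_cases hi : i ∈ J
      · exact Submodule.subset_span (Finset.mem_coe.mpr (Finset.mem_image_of_mem _ hi))
      · rw [hJ0 i hi]; exact zero_mem _
    have h1 := Submodule.finrank_mono hle
    have h2 := finrank_span_finset_le_card (R := RatFunc ℂ) (J.image fun i => M.mulVec (b i))
    have h3 := Finset.card_image_le (s := J) (f := fun i => M.mulVec (b i))
    have h4 : M.rank = Module.finrank (RatFunc ℂ) (LinearMap.range M.mulVecLin) := rfl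
    unfold Set.finrank at h2
    omega
  obtain ⟨i, j, k, hi, hj, hk, hij, hik, hjk⟩ := Finset.two_lt_card_iff.mp hJ
  simp only [J, Finset.mem_filter, Finset.mem_univ, true_and] at hi hj hk
  obtain ⟨x, y, z, hne, e⟩ := Polynomial.conic_ratFunc _ _ _ hi hj hk
  have expand : ∀ l, b l ⬝ᵥ M.mulVec (x • b i + y • b j + z • b k) =
      x * (b l ⬝ᵥ M.mulVec (b i)) + y * (b l ⬝ᵥ M.mulVec (b j)) + z * (b l ⬝ᵥ M.mulVec (b k)) := by
    intro l
    simp only [Matrix.mulVec_add, Matrix.mulVec_smul, dotProduct_add, dotProduct_smul, smul_eq_mul]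
  have ei := expand i
  have ej := expand j
  have ek := expand k
  rw [hbo i j hij, hbo i k hik] at ei
  rw [hbo j i hij.symm, hbo j k hjk] at ej
  rw [hbo k i hik.symm, hbo k j hjk.symm] at ek
  refine ⟨x • b i + y • b j + z • b k, ?_, ?_⟩
  · have : ∀ u : Fin m → RatFunc ℂ, ∑ i, ∑ j, M i j * u i * u j = u ⬝ᵥ M.mulVec u := by
      intro u
      simp only [dotProduct, Matrix.mulVec, Finset.mul_sum]
      exact Finset.sum_congr rfl fun i _ => Finset.sum_congr rfl fun j _ => by ring
    rw [this, add_dotProduct, add_dotProduct, smul_dotProduct, smul_dotProduct, smul_dotProduct,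
      ei, ej, ek]
    simp only [smul_eq_mul]
    linear_combination e
  · intro h0
    rw [h0, dotProduct_zero] at ei ej ek
    simp only [mul_zero, add_zero, zero_add, zero_eq_mul] at ei ej ek
    tauto

/-! ### Recognising rational function fields -/

/-- A generating family with no more members than some algebraically independent family is itself
algebraically independent. -/
lemma algebraicIndependent_of_generates {N ι κ : Type} [Field N] [Algebra ℂ N] [Fintype ι]
    [Fintype κ] (y : ι → N) (hy : IntermediateField.adjoin ℂ (Set.range y) = ⊤)
    (x : κ → N) (hx : AlgebraicIndependent ℂ x) (hcard : Fintype.card ι ≤ Fintype.card κ) :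
    AlgebraicIndependent ℂ y := by
  have : Algebra.IsAlgebraic (Algebra.adjoin ℂ (Set.range y)) N := by
    constructor
    intro u
    have hu : u ∈ IntermediateField.adjoin ℂ (Set.range y) := hy ▸ IntermediateField.mem_top
    obtain ⟨r, hr, s, hs, rfl⟩ := IntermediateField.mem_adjoin_iff_div.mp hu
    rw [div_eq_mul_inv]
    exact (isAlgebraic_algebraMap (⟨r, hr⟩ : Algebra.adjoin ℂ (Set.range y))).mul
      (isAlgebraic_algebraMap (⟨s, hs⟩ : Algebra.adjoin ℂ (Set.range y))).inv
  refine (Algebra.IsAlgebraic.isTranscendenceBasis_of_le_trdeg_of_finite ℂ y ?_).1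
  refine le_trans ?_ hx.cardinalMk_le_trdeg
  simpa using hcard

/-- The isomorphism with the rational function field attached to an algebraically independent
generating family. -/
def equivRatFF {N : Type} [Field N] [Algebra ℂ N] {d : ℕ} {y : Fin d → N}
    (hy : IntermediateField.adjoin ℂ (Set.range y) = ⊤) (hind : AlgebraicIndependent ℂ y) :
    RatFF d ≃ₐ[ℂ] N :=
  (hind.aevalEquivField.trans (IntermediateField.equivOfEq hy)).trans IntermediateField.topEquiv

lemma equivRatFF_X {N : Type} [Field N] [Algebra ℂ N] {d : ℕ} {y : Fin d → N}
    (hy : IntermediateField.adjoin ℂ (Set.range y) = ⊤) (hind : AlgebraicIndependent ℂ y)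
    (i : Fin d) : equivRatFF hy hind (algebraMap (MvPolynomial (Fin d) ℂ) (RatFF d) (X i)) = y i := by
  have := hind.aevalEquivField_algebraMap_apply_coe (X i)
  rw [aeval_X] at this
  rw [← this]
  rfl

lemma not_isSquare_X {d : ℕ} (i : Fin d) :
    ¬ IsSquare (algebraMap (MvPolynomial (Fin d) ℂ) (RatFF d) (X i)) := by
  rintro ⟨s, hs⟩
  have hs' : s ^ 2 = algebraMap (MvPolynomial (Fin d) ℂ) (RatFF d) (X i) := by rw [hs, sq]
  obtain ⟨t, rfl⟩ := IsIntegrallyClosed.exists_algebraMap_eq_of_isIntegral_pow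
    (R := MvPolynomial (Fin d) ℂ) (x := s) (n := 2) (by norm_num) (hs' ▸ isIntegral_algebraMap)
  rw [← map_pow] at hs'
  have h := IsFractionRing.injective (MvPolynomial (Fin d) ℂ) (RatFF d) hs'
  exact (MvPolynomial.X_prime (R := ℂ) (i := i)).irreducible.not_isSquare ⟨t, by rw [← h, sq]⟩

lemma irreducible_of_not_isSquare {F : Type} [Field F] {α : F} (h : ¬ IsSquare α) :
    Irreducible (Polynomial.X ^ 2 - Polynomial.C α) := by
  refine (X_pow_sub_C_irreducible_iff_of_prime Nat.prime_two).mpr fun b hb => h ⟨b, ?_⟩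
  rw [← hb, sq]

/-- If every quadratic extension `N = F(√α)` is generated over `ℂ` by `d` elements, and `F` contains
at least `d` algebraically independent elements, then `F(√α)` is purely transcendental. The
extension enters `H` as an abstract field, so that the concrete `AdjoinRoot` is used only here. -/
lemma exists_adjoinRoot_equiv {F : Type} [Field F] [Algebra ℂ F] {α : F} (h : ¬ IsSquare α) {d : ℕ}
    {κ : Type} [Fintype κ] (x : κ → F) (hx : AlgebraicIndependent ℂ x) (hκ : d ≤ Fintype.card κ)
    (H : ∀ (N : Type) [Field N] [Algebra ℂ N] [Algebra F N] [IsScalarTower ℂ F N] (ζ : N),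
      ζ ^ 2 = algebraMap F N α → Algebra.adjoin F {ζ} = ⊤ →
      ∃ w : Fin d → N, IntermediateField.adjoin ℂ (Set.range w) = ⊤) :
    Nonempty (AdjoinRoot (Polynomial.X ^ 2 - Polynomial.C α) ≃ₐ[ℂ] RatFF d) := by
  have : Fact (Irreducible (Polynomial.X ^ 2 - Polynomial.C α)) :=
    ⟨irreducible_of_not_isSquare h⟩
  obtain ⟨w, hw⟩ := H (AdjoinRoot (Polynomial.X ^ 2 - Polynomial.C α)) (AdjoinRoot.root _)
    (by
      have := AdjoinRoot.eval₂_root (Polynomial.X ^ 2 - Polynomial.C α)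
      simpa [sub_eq_zero] using this)
    AdjoinRoot.adjoinRoot_eq_top
  have hx' := hx.map' (f := IsScalarTower.toAlgHom ℂ F
    (AdjoinRoot (Polynomial.X ^ 2 - Polynomial.C α))) (RingHom.injective _)
  exact ⟨(equivRatFF hw (algebraicIndependent_of_generates w hw _ hx' (by simpa using hκ))).symm⟩

/-- A field that is purely transcendental of positive degree `d` over `ℂ` has a purely
transcendental quadratic extension: adjoin a square root of a free generator. -/
lemma exists_sqrt_generator {F : Type} [Field F] [Algebra ℂ F] {d : ℕ} (hd : 0 < d)
    {κ : Type} [Fintype κ] (x : κ → F) (hx : AlgebraicIndependent ℂ x) (hκ : d ≤ Fintype.card κ)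
    (y : Fin d → F) (hy : IntermediateField.adjoin ℂ (Set.range y) = ⊤) :
    ∃ α : F, Nonempty (AdjoinRoot (Polynomial.X ^ 2 - Polynomial.C α) ≃ₐ[ℂ] RatFF d) := by
  have hind := algebraicIndependent_of_generates y hy x hx (by simpa using hκ)
  refine ⟨y ⟨0, hd⟩, exists_adjoinRoot_equiv ?_ x hx hκ ?_⟩
  · rintro ⟨s, hs⟩
    apply not_isSquare_X (⟨0, hd⟩ : Fin d)
    refine ⟨(equivRatFF hy hind).symm s, (equivRatFF hy hind).injective ?_⟩
    rw [equivRatFF_X, map_mul, AlgEquiv.apply_symm_apply, hs]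
  · intro N _ _ _ _ ζ hζ htop
    refine ⟨Function.update (fun i => algebraMap F N (y i)) ⟨0, hd⟩ ζ, ?_⟩
    set w := Function.update (fun i => algebraMap F N (y i)) ⟨0, hd⟩ ζ with hw
    set S := IntermediateField.adjoin ℂ (Set.range w) with hS
    have hwS : ∀ i, w i ∈ S := fun i => IntermediateField.subset_adjoin _ _ ⟨i, rfl⟩
    have hζS : ζ ∈ S := by simpa [hw] using hwS ⟨0, hd⟩
    have hyS : ∀ i, algebraMap F N (y i) ∈ S := by
      intro i
      by_cases hi : i = ⟨0, hd⟩
      · rw [hi, ← hζ]; exact pow_mem hζS 2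
      · simpa [hw, hi] using hwS i
    have hFS : ∀ u : F, algebraMap F N u ∈ S := by
      have : IntermediateField.adjoin ℂ (Set.range y) ≤
          S.comap (IsScalarTower.toAlgHom ℂ F N) := by
        rw [IntermediateField.adjoin_le_iff]
        rintro _ ⟨i, rfl⟩
        exact hyS i
      intro u
      exact this (hy ▸ IntermediateField.mem_top)
    rw [eq_top_iff]
    intro u _
    have hu : u ∈ Algebra.adjoin F {ζ} := htop ▸ Algebra.mem_top
    induction hu using Algebra.adjoin_induction with
    | mem x hx => rw [Set.mem_singleton_iff.mp hx]; exact hζS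
    | algebraMap r => exact hFS r
    | add x y _ _ h1 h2 => exact add_mem (h1 trivial) (h2 trivial)
    | mul x y _ _ h1 h2 => exact mul_mem (h1 trivial) (h2 trivial)

/-! ### Polynomials of degree at most two as quadratic forms -/

lemma homogMat_symm {n : ℕ} (f : MvPolynomial (Fin n) ℂ) (i j : Fin (n + 1)) :
    homogMat f i j = homogMat f j i := by
  unfold homogMat
  simp only [Matrix.of_apply]
  split_ifs with h1 h2 h3 h4 h5 h6 <;> simp_all [add_comm]

lemma homogMat_succ_succ {n : ℕ} (f : MvPolynomial (Fin n) ℂ) (i j : Fin n) :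
    homogMat f i.succ j.succ = (1 / 2) * (1 + if i = j then 1 else 0) *
      coeff (Finsupp.single i 1 + Finsupp.single j 1) f := by
  by_cases h : i = j
  · subst h
    have : (Finsupp.single i 1 + Finsupp.single i 1 : Fin n →₀ ℕ) = Finsupp.single i 2 := by
      rw [← Finsupp.single_add]
    simp [homogMat, this]
    ring
  · simp [homogMat, h]

/-- The quadratic form `wᵀ (homogMat f) w` at `w = (1, x)`, written out by degree. -/
lemma homogMat_sum_eq {n : ℕ} {N : Type} [Field N] [Algebra ℂ N] (x : Fin n → N)
    (f : MvPolynomial (Fin n) ℂ) :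
    ∑ i, ∑ j, algebraMap ℂ N (homogMat f i j) * (Fin.cons 1 x : Fin (n + 1) → N) i *
        (Fin.cons 1 x : Fin (n + 1) → N) j =
      algebraMap ℂ N (coeff 0 f) + ∑ i, algebraMap ℂ N (coeff (Finsupp.single i 1) f) * x i +
        ∑ i, ∑ j, algebraMap ℂ N ((1 / 2) * (1 + if i = j then 1 else 0) *
          coeff (Finsupp.single i 1 + Finsupp.single j 1) f) * x i * x j := by
  have h0 : ∀ j : Fin n, homogMat f 0 j.succ = (1 / 2) * coeff (Finsupp.single j 1) f := by
    intro j; simp [homogMat]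
  have h0' : ∀ j : Fin n, homogMat f j.succ 0 = (1 / 2) * coeff (Finsupp.single j 1) f := by
    intro j; simp [homogMat]
  have h00 : homogMat f 0 0 = coeff 0 f := by simp [homogMat]
  simp only [Fin.sum_univ_succ, Fin.cons_zero, Fin.cons_succ, homogMat_succ_succ, h0, h0', h00,
    Finset.sum_add_distrib]
  have : ∑ i, algebraMap ℂ N (coeff (Finsupp.single i 1) f) * x i =
      ∑ i, algebraMap ℂ N ((1 / 2) * coeff (Finsupp.single i 1) f) * x i +
      ∑ i, algebraMap ℂ N ((1 / 2) * coeff (Finsupp.single i 1) f) * x i := by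
    rw [← Finset.sum_add_distrib]
    refine Finset.sum_congr rfl fun i _ => ?_
    rw [← add_mul, ← map_add]
    ring_nf
  rw [this]
  simp only [mul_one]
  ring

lemma finsupp_degree_le_two {n : ℕ} (m : Fin n →₀ ℕ) (hm : m.degree ≤ 2) :
    m = 0 ∨ (∃ a, m = Finsupp.single a 1) ∨
      ∃ a b, m = Finsupp.single a 1 + Finsupp.single b 1 := by
  have key : ∀ m : Fin n →₀ ℕ, m ≠ 0 → ∃ a m', m = Finsupp.single a 1 + m' ∧
      m.degree = 1 + m'.degree := by
    intro m hm
    obtain ⟨a, ha⟩ := Finsupp.ne_iff.mp hm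
    have hle : Finsupp.single a 1 ≤ m := by
      rw [Finsupp.single_le_iff]; exact Nat.one_le_iff_ne_zero.mpr ha
    have e : m = Finsupp.single a 1 + (m - Finsupp.single a 1) := (add_tsub_cancel_of_le hle).symm
    refine ⟨a, m - Finsupp.single a 1, e, ?_⟩
    conv_lhs => rw [e]
    rw [map_add, Finsupp.degree_single]
  by_cases h : m = 0
  · exact Or.inl h
  obtain ⟨a, m', e, hd⟩ := key m h
  by_cases h' : m' = 0
  · right; left; exact ⟨a, by rw [e, h', add_zero]⟩
  obtain ⟨b, m'', e', hd'⟩ := key m' h'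
  have : m'' = 0 := by
    rw [← Finsupp.degree_eq_zero_iff]; omega
  right; right
  exact ⟨a, b, by rw [e, e', this, add_zero]⟩

/-- The expansion by degree for a single monomial of degree at most two. The factor
`(1/2) (1 + δᵢⱼ)` accounts for each mixed monomial `xᵢ xⱼ` occurring twice in the double sum. -/
lemma homog_aeval_monomial {n : ℕ} {N : Type} [Field N] [Algebra ℂ N] (x : Fin n → N)
    (m : Fin n →₀ ℕ) (hm : m.degree ≤ 2) (c : ℂ) :
    aeval x (monomial m c) =
      algebraMap ℂ N (coeff 0 (monomial m c)) +
        ∑ i, algebraMap ℂ N (coeff (Finsupp.single i 1) (monomial m c)) * x i +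
        ∑ i, ∑ j, algebraMap ℂ N ((1 / 2) * (1 + if i = j then 1 else 0) *
          coeff (Finsupp.single i 1 + Finsupp.single j 1) (monomial m c)) * x i * x j := by
  have hdeg : ∀ {p q : Fin n →₀ ℕ}, p = q → p.degree = q.degree := fun h => h ▸ rfl
  have e1 : ∀ i : Fin n, (0 : Fin n →₀ ℕ) ≠ Finsupp.single i 1 := fun i h => by
    simpa [Finsupp.degree_single] using hdeg h
  have e2 : ∀ i j : Fin n, (0 : Fin n →₀ ℕ) ≠ Finsupp.single i 1 + Finsupp.single j 1 :=
    fun i j h => by simpa [Finsupp.degree_single] using hdeg h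
  have e3 : ∀ i j k : Fin n, Finsupp.single k 1 ≠
      (Finsupp.single i 1 + Finsupp.single j 1 : Fin n →₀ ℕ) :=
    fun i j k h => by simpa [Finsupp.degree_single] using hdeg h
  rw [aeval_monomial]
  rcases finsupp_degree_le_two m hm with rfl | ⟨a, rfl⟩ | ⟨a, b, rfl⟩
  · simp [e1, e2]
  · simp [coeff_monomial, (e1 _).symm, e3, Finsupp.single_left_inj, apply_ite (algebraMap ℂ N),
      ite_mul]
  · have e4 : ∀ i j : Fin n, ((Finsupp.single a 1 + Finsupp.single b 1 : Fin n →₀ ℕ) =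
        Finsupp.single i 1 + Finsupp.single j 1) ↔ (i = a ∧ j = b) ∨ (i = b ∧ j = a) := by
      intro i j
      rw [Finsupp.single_add_single_eq_single_add_single (by norm_num) (by norm_num)]
      constructor
      · simp; grind
      · simp; grind
    have lhs : algebraMap ℂ N c * (Finsupp.single a 1 + Finsupp.single b 1 : Fin n →₀ ℕ).prod
        (fun i k => x i ^ k) = algebraMap ℂ N c * x a * x b := by
      rw [Finsupp.prod_add_index' (by simp) (by intros; rw [pow_add])]
      simp [mul_assoc]
    rw [lhs]
    simp only [coeff_monomial, (e2 _ _).symm, (e3 _ _ _).symm, e4, if_false, map_zero, zero_mul,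
      Finset.sum_const_zero, zero_add]
    by_cases hab : a = b
    · subst hab
      have : ∀ i j, algebraMap ℂ N (1 / 2 * (1 + if i = j then 1 else 0) *
          if i = a ∧ j = a ∨ i = a ∧ j = a then c else 0) * x i * x j =
          if i = a then (if j = a then algebraMap ℂ N c * x a * x a else 0) else 0 := by
        intro i j
        by_cases hi : i = a
        · by_cases hj : j = a
          · subst hi hj
            simp only [and_self, or_self, if_true]
            congr 3; ring
          · simp [hj]
        · simp [hi]
      simp only [this, Finset.sum_ite_eq', Finset.mem_univ, if_true, Finset.sum_ite_irrel,
        Finset.sum_const_zero]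
    · have : ∀ i j, algebraMap ℂ N (1 / 2 * (1 + if i = j then 1 else 0) *
          if i = a ∧ j = b ∨ i = b ∧ j = a then c else 0) * x i * x j =
          (if i = a then (if j = b then algebraMap ℂ N (1 / 2 * c) * x a * x b else 0) else 0) +
          (if i = b then (if j = a then algebraMap ℂ N (1 / 2 * c) * x a * x b else 0) else 0) := by
        intro i j
        by_cases hij : i = j
        · subst hij
          have h1 : ¬ (i = a ∧ i = b) := fun h => hab (h.1.symm.trans h.2)
          have h2 : ¬ (i = b ∧ i = a) := fun h => hab (h.2.symm.trans h.1)
          have h3 : ¬ (i = a ∧ i = b ∨ i = b ∧ i = a) := by tauto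
          rw [if_neg h3, ← ite_and, ← ite_and, if_neg h1, if_neg h2]; simp
        · by_cases h1 : i = a ∧ j = b
          · obtain ⟨rfl, rfl⟩ := h1
            simp [hij]
          · by_cases h2 : i = b ∧ j = a
            · obtain ⟨rfl, rfl⟩ := h2
              simp [hij]; ring
            · have h3 : ¬ (i = a ∧ j = b ∨ i = b ∧ j = a) := by tauto
              rw [if_neg h3, ← ite_and, ← ite_and, if_neg h1, if_neg h2]; simp
      simp only [this, Finset.sum_add_distrib, Finset.sum_ite_eq', Finset.mem_univ, if_true,
        Finset.sum_ite_irrel, Finset.sum_const_zero]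
      rw [← add_mul, ← add_mul, ← map_add]
      congr 3; ring

/-- Evaluating `f` at `x` is evaluating the quadratic form of `homogMat f` at `(1, x)`. -/
lemma aeval_eq_homogMat {n : ℕ} {N : Type} [Field N] [Algebra ℂ N] (x : Fin n → N)
    (f : MvPolynomial (Fin n) ℂ) (hf : f.totalDegree ≤ 2) :
    aeval x f = ∑ i, ∑ j, algebraMap ℂ N (homogMat f i j) * (Fin.cons 1 x : Fin (n + 1) → N) i *
      (Fin.cons 1 x : Fin (n + 1) → N) j := by
  rw [homogMat_sum_eq]
  have hs : ∀ m ∈ f.support, m.degree ≤ 2 := fun m hm =>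
    le_trans (le_totalDegree hm) hf
  rw [f.as_sum]
  generalize f.support = s at hs
  rw [map_sum, Finset.sum_congr rfl fun m hm => homog_aeval_monomial x m (hs m hm) (coeff m f)]
  simp only [Finset.sum_add_distrib, coeff_sum, map_sum, Finset.sum_mul, Finset.mul_sum]
  congr 1
  · congr 1; exact Finset.sum_comm
  · rw [Finset.sum_comm]
    exact Finset.sum_congr rfl fun i _ => Finset.sum_comm

/-! ### Generators of `ℂ(x₁,…,xₙ,ζ)` -/

/-- If `(1, x)` satisfies a nontrivial linear relation over `ℂ(ζ)`, then some `xᵢ` with nonzero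
coefficient can be replaced by `ζ`, and the new family still generates `ζ` and all of `x`. -/
lemma generators_of_linear_relation {n : ℕ} {N : Type} [Field N] [Algebra ℂ N] (x : Fin n → N)
    (ζ : N) (c : Fin (n + 1) → N) (hc : ∀ j, c j ∈ IntermediateField.adjoin ℂ {ζ}) (hc0 : c ≠ 0)
    (hrel : ∑ j, c j * (Fin.cons 1 x : Fin (n + 1) → N) j = 0) :
    ∃ y : Fin n → N, ζ ∈ IntermediateField.adjoin ℂ (Set.range y) ∧
      ∀ i, x i ∈ IntermediateField.adjoin ℂ (Set.range y) := by
  classical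
  rw [Fin.sum_univ_succ] at hrel
  simp only [Fin.cons_zero, Fin.cons_succ, mul_one] at hrel
  have hex : ∃ i : Fin n, c i.succ ≠ 0 := by
    by_contra! h
    simp only [h, zero_mul, Finset.sum_const_zero, add_zero] at hrel
    exact hc0 (funext fun j => Fin.cases hrel h j)
  obtain ⟨i, hi⟩ := hex
  refine ⟨Function.update x i ζ, ?_⟩
  set S := IntermediateField.adjoin ℂ (Set.range (Function.update x i ζ)) with hS
  have hyS : ∀ k, Function.update x i ζ k ∈ S :=
    fun k => IntermediateField.subset_adjoin _ _ ⟨k, rfl⟩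
  have hζ : ζ ∈ S := by simpa using hyS i
  have hle : IntermediateField.adjoin ℂ {ζ} ≤ S := by
    rw [IntermediateField.adjoin_le_iff]; simpa using hζ
  have hne : ∀ k, k ≠ i → x k ∈ S := fun k hk => by simpa [hk] using hyS k
  refine ⟨hζ, fun k => ?_⟩
  by_cases hk : k = i
  · subst hk
    rw [← Finset.add_sum_erase _ _ (Finset.mem_univ k)] at hrel
    have : x k = -(c 0 + ∑ j ∈ Finset.univ.erase k, c j.succ * x j) / c k.succ := by
      rw [eq_div_iff hi]; linear_combination hrel
    rw [this]
    refine div_mem (neg_mem (add_mem (hle (hc 0)) (sum_mem fun j hj => ?_))) (hle (hc _))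
    exact mul_mem (hle (hc _)) (hne j (Finset.ne_of_mem_erase hj))
  · exact hne k hk

/-- If `(1 : x)` lies on a quadric over `ℂ(ζ)` that has a rational point `v` outside its vertex, then
`ζ` and `x` are generated by `n` elements. Projection from `v` sends `(1 : x)` to a point of
`ℙⁿ⁻¹`; its `n - 1` affine coordinates together with `ζ` determine `x`. When `(1 : x)` lies on the
tangent hyperplane at `v` the projection cannot be inverted, but then the equation of that
hyperplane is a linear relation. -/
lemma generators_of_quadric {n : ℕ} {N : Type} [Field N] [Algebra ℂ N] (x : Fin n → N)
    (ζ : N) (M : Fin (n + 1) → Fin (n + 1) → N)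
    (hM : ∀ i j, M i j ∈ IntermediateField.adjoin ℂ {ζ}) (hsymm : ∀ i j, M i j = M j i)
    (v : Fin (n + 1) → N) (hv : ∀ j, v j ∈ IntermediateField.adjoin ℂ {ζ})
    (hvv : ∑ i, ∑ j, M i j * v i * v j = 0) (hv0 : (fun i => ∑ j, M i j * v j) ≠ 0)
    (hrel : ∑ i, ∑ j, M i j * (Fin.cons 1 x : Fin (n + 1) → N) i *
      (Fin.cons 1 x : Fin (n + 1) → N) j = 0) :
    ∃ y : Fin n → N, ζ ∈ IntermediateField.adjoin ℂ (Set.range y) ∧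
      ∀ i, x i ∈ IntermediateField.adjoin ℂ (Set.range y) := by
  classical
  by_cases hlin : ∑ i, (∑ j, M i j * v j) * (Fin.cons 1 x : Fin (n + 1) → N) i = 0
  · exact generators_of_linear_relation x ζ _
      (fun i => sum_mem fun j _ => mul_mem (hM i j) (hv j)) hv0 hlin
  set w : Fin (n + 1) → N := Fin.cons 1 x with hw
  have hvne : ∃ k, v k ≠ 0 := by
    by_contra! h
    exact hv0 (funext fun i => by simp [h])
  obtain ⟨k, hk⟩ := hvne
  -- the point `p` of the hyperplane `{p_k = 0}` on the line through `v` and `w`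
  set s := w k / v k with hs
  set p : Fin (n + 1) → N := fun j => w j - s * v j with hp
  have hpk : p k = 0 := by simp only [hp, hs]; field_simp; ring
  have hBp : ∑ i, (∑ j, M i j * v j) * p i = ∑ i, (∑ j, M i j * v j) * w i := by
    have : ∑ i, (∑ j, M i j * v j) * p i =
        ∑ i, (∑ j, M i j * v j) * w i - s * ∑ i, ∑ j, M i j * v i * v j := by
      rw [Finset.mul_sum, ← Finset.sum_sub_distrib]
      refine Finset.sum_congr rfl fun i _ => ?_
      simp only [hp, mul_sub, Finset.sum_mul, Finset.mul_sum]
      congr 1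
      exact Finset.sum_congr rfl fun j _ => by ring
    rw [this, hvv, mul_zero, sub_zero]
  have hpne : ∃ j0, p j0 ≠ 0 := by
    by_contra! h
    apply hlin
    rw [← hBp]; simp [h]
  obtain ⟨j0, hj0⟩ := hpne
  have hquad : ∑ i, ∑ j, M i j * p i * p j + 2 * s * ∑ i, (∑ j, M i j * v j) * p i = 0 := by
    have e : ∑ i, ∑ j, M i j * w i * w j = ∑ i, ∑ j, M i j * p i * p j +
        s * ∑ i, (∑ j, M i j * v j) * p i + s * (∑ i, ∑ j, M i j * v i * p j) +
        s ^ 2 * ∑ i, ∑ j, M i j * v i * v j := by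
      simp only [Finset.mul_sum, Finset.sum_mul, ← Finset.sum_add_distrib]
      refine Finset.sum_congr rfl fun i _ => Finset.sum_congr rfl fun j _ => ?_
      simp only [hp]; ring
    have e' : ∑ i, ∑ j, M i j * v i * p j = ∑ i, (∑ j, M i j * v j) * p i := by
      rw [Finset.sum_comm]
      refine Finset.sum_congr rfl fun i _ => ?_
      rw [Finset.sum_mul]
      exact Finset.sum_congr rfl fun j _ => by rw [hsymm]
    rw [hvv, hrel, e'] at e
    linear_combination -e
  set t : Fin (n + 1) → N := fun j => p j / p j0 with ht
  set Bt := ∑ i, (∑ j, M i j * v j) * t i with hBt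
  set qt := ∑ i, ∑ j, M i j * t i * t j with hqt
  have hBt' : Bt * p j0 = ∑ i, (∑ j, M i j * v j) * p i := by
    rw [hBt, Finset.sum_mul]
    refine Finset.sum_congr rfl fun i _ => ?_
    simp only [ht]; field_simp
  have hqt' : qt * p j0 ^ 2 = ∑ i, ∑ j, M i j * p i * p j := by
    rw [hqt]
    simp only [Finset.sum_mul]
    refine Finset.sum_congr rfl fun i _ => Finset.sum_congr rfl fun j _ => ?_
    simp only [ht]; field_simp
  have hBt0 : Bt ≠ 0 := by
    rintro h
    apply hlin
    rw [← hBp, ← hBt', h, zero_mul]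
  have h2 : (2 : N) ≠ 0 := by
    rw [← map_ofNat (algebraMap ℂ N) 2]
    exact (map_ne_zero _).mpr two_ne_zero
  -- the second intersection point of the line through `v` and `t` with the quadric
  have hW : ∀ j, w j / p j0 = t j - qt / (2 * Bt) * v j := by
    intro j
    have h1 : s = -(qt / (2 * Bt)) * p j0 := by
      rw [← hqt', ← hBt'] at hquad
      have : p j0 * (qt * p j0 + 2 * s * Bt) = 0 := by linear_combination hquad
      have := (mul_eq_zero.mp this).resolve_left hj0
      field_simp
      linear_combination this
    have h3 : w j = p j + s * v j := by simp only [hp]; ring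
    rw [h3, h1]
    simp only [ht]
    field_simp
    ring
  -- The coordinates are `tⱼ` for `j ≠ k`; as `t_{j0} = 1`, the slot of `j0` is free for `ζ`.
  refine ⟨fun i => if k.succAbove i = j0 then ζ else t (k.succAbove i), ?_⟩
  set y : Fin n → N := fun i => if k.succAbove i = j0 then ζ else t (k.succAbove i) with hy
  set S := IntermediateField.adjoin ℂ (Set.range y) with hS
  have hyS : ∀ i, y i ∈ S := fun i => IntermediateField.subset_adjoin _ _ ⟨i, rfl⟩
  have hj0k : j0 ≠ k := by rintro rfl; exact hj0 hpk
  have hζ : ζ ∈ S := by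
    obtain ⟨i, hi⟩ := Fin.exists_succAbove_eq hj0k
    simpa [hy, hi] using hyS i
  have hle : IntermediateField.adjoin ℂ {ζ} ≤ S := by
    rw [IntermediateField.adjoin_le_iff]; simpa using hζ
  have htS : ∀ j, t j ∈ S := by
    intro j
    by_cases hjk : j = k
    · subst hjk; simp only [ht, hpk, zero_div]; exact zero_mem S
    by_cases hjj : j = j0
    · subst hjj; simp only [ht, div_self hj0]; exact one_mem S
    obtain ⟨i, rfl⟩ := Fin.exists_succAbove_eq hjk
    simpa [hy, hjj] using hyS i
  have hBS : Bt ∈ S := sum_mem fun i _ => mul_mem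
    (sum_mem fun j _ => mul_mem (hle (hM i j)) (hle (hv j))) (htS i)
  have hqS : qt ∈ S := sum_mem fun i _ => sum_mem fun j _ =>
    mul_mem (mul_mem (hle (hM i j)) (htS i)) (htS j)
  have hWS : ∀ j, w j / p j0 ∈ S := fun j => by
    rw [hW]
    exact sub_mem (htS j) (mul_mem (div_mem hqS (mul_mem (ofNat_mem S 2) hBS)) (hle (hv j)))
  refine ⟨hζ, fun i => ?_⟩
  have : x i = (w i.succ / p j0) / (w 0 / p j0) := by
    simp only [hw, Fin.cons_zero, Fin.cons_succ]
    field_simp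
  rw [this]
  exact div_mem (hWS _) (hWS _)

lemma mem_range_of_isAlgebraic {N : Type} [Field N] [Algebra ℂ N] {ζ : N} (h : IsAlgebraic ℂ ζ) :
    ζ ∈ (algebraMap ℂ N).range :=
  minpoly.mem_range_of_degree_eq_one ℂ ζ
    (IsAlgClosed.degree_eq_one_of_irreducible ℂ (minpoly.irreducible h.isIntegral))

/-- A transcendental element `ζ` of `N` determines an embedding `ℂ(z) → N`, `z ↦ ζ`, with image
in `ℂ(ζ)`. -/
lemma exists_ratFunc_hom {N : Type} [Field N] [Algebra ℂ N] {ζ : N} (h : Transcendental ℂ ζ) :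
    ∃ φ : RatFunc ℂ →ₐ[ℂ] N, φ RatFunc.X = ζ ∧
      ∀ u, φ u ∈ IntermediateField.adjoin ℂ {ζ} := by
  have hinj : Function.Injective (Polynomial.aeval (R := ℂ) ζ) :=
    transcendental_iff_injective.mp h
  have hle : nonZeroDivisors (Polynomial ℂ) ≤
      (nonZeroDivisors N).comap (Polynomial.aeval (R := ℂ) ζ) :=
    nonZeroDivisors_le_comap_nonZeroDivisors_of_injective _ hinj
  refine ⟨RatFunc.liftAlgHom (Polynomial.aeval ζ) hle, ?_, fun u => ?_⟩
  · simp [RatFunc.liftAlgHom_apply]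
  · rw [RatFunc.liftAlgHom_apply]
    have hp : ∀ p : Polynomial ℂ, Polynomial.aeval ζ p ∈ IntermediateField.adjoin ℂ {ζ} := fun p =>
      IntermediateField.algebra_adjoin_le_adjoin _ _ (Polynomial.aeval_mem_adjoin_singleton ℂ ζ)
    exact div_mem (hp _) (hp _)

/-- If `ζ² = f(x)/g(x)` with `f`, `g` as in the theorem, then `n` elements generate `x₁,…,xₙ` and
`ζ`. -/
lemma generators_of_sqrt {n : ℕ} {N : Type} [Field N] [Algebra ℂ N] (x : Fin n → N) (ζ : N)
    (f g : MvPolynomial (Fin n) ℂ) (hg : aeval x g ≠ 0) (hζ : ζ ^ 2 * aeval x g = aeval x f)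
    (hcase :
      (f.totalDegree ≤ 1 ∧ g.totalDegree ≤ 1) ∨
      (f.totalDegree ≤ 2 ∧ g.totalDegree ≤ 2 ∧
        3 ≤ Matrix.rank (Matrix.of fun i j =>
          (RatFunc.X : RatFunc ℂ) ^ 2 * algebraMap ℂ (RatFunc ℂ) (homogMat g i j) -
            algebraMap ℂ (RatFunc ℂ) (homogMat f i j)))) :
    ∃ y : Fin n → N, ζ ∈ IntermediateField.adjoin ℂ (Set.range y) ∧
      ∀ i, x i ∈ IntermediateField.adjoin ℂ (Set.range y) := by
  by_cases halg : IsAlgebraic ℂ ζ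
  · obtain ⟨c, rfl⟩ := mem_range_of_isAlgebraic halg
    exact ⟨x, IntermediateField.algebraMap_mem _ c,
      fun i => IntermediateField.subset_adjoin _ _ ⟨i, rfl⟩⟩
  have hζmem : ζ ∈ IntermediateField.adjoin ℂ {ζ} := IntermediateField.mem_adjoin_simple_self ℂ ζ
  rcases hcase with ⟨hf1, hg1⟩ | ⟨hf2, hg2, hrank⟩
  · have lin : ∀ p : MvPolynomial (Fin n) ℂ, p.totalDegree ≤ 1 → aeval x p =
        algebraMap ℂ N (coeff 0 p) +
          ∑ i, algebraMap ℂ N (coeff (Finsupp.single i 1) p) * x i := by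
      intro p hp
      rw [aeval_eq_homogMat x p (by omega), homogMat_sum_eq, add_eq_left]
      refine Finset.sum_eq_zero fun i _ => Finset.sum_eq_zero fun j _ => ?_
      rw [coeff_eq_zero_of_totalDegree_lt]
      · simp
      · have : (Finsupp.single i 1 + Finsupp.single j 1 : Fin n →₀ ℕ).degree = 2 := by
          rw [map_add, Finsupp.degree_single, Finsupp.degree_single]
        exact lt_of_le_of_lt hp (by
          change 1 < (Finsupp.single i 1 + Finsupp.single j 1 : Fin n →₀ ℕ).degree
          omega)
    refine generators_of_linear_relation x ζ
      (Fin.cons (ζ ^ 2 * algebraMap ℂ N (coeff 0 g) - algebraMap ℂ N (coeff 0 f))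
        fun i => ζ ^ 2 * algebraMap ℂ N (coeff (Finsupp.single i 1) g) -
          algebraMap ℂ N (coeff (Finsupp.single i 1) f)) ?_ ?_ ?_
    · intro j
      refine Fin.cases ?_ (fun i => ?_) j
      · exact sub_mem (mul_mem (pow_mem hζmem 2) (IntermediateField.algebraMap_mem _ _))
          (IntermediateField.algebraMap_mem _ _)
      · exact sub_mem (mul_mem (pow_mem hζmem 2) (IntermediateField.algebraMap_mem _ _))
          (IntermediateField.algebraMap_mem _ _)
    · intro h0
      have key : ∀ u v : ℂ, ζ ^ 2 * algebraMap ℂ N u - algebraMap ℂ N v = 0 → u = 0 := by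
        intro u v h
        by_contra hu
        have hu' : algebraMap ℂ N u ≠ 0 := (map_ne_zero _).mpr hu
        apply halg
        have : ζ ^ 2 = algebraMap ℂ N (v / u) := by
          rw [map_div₀, eq_div_iff hu']; linear_combination h
        exact IsAlgebraic.of_pow two_pos (this ▸ isAlgebraic_algebraMap _)
      apply hg
      have h00 : coeff 0 g = 0 := key _ (coeff 0 f) (by simpa using congrFun h0 0)
      have : ∀ i : Fin n, coeff (Finsupp.single i 1) g = 0 :=
        fun i => key _ (coeff (Finsupp.single i 1) f) (by simpa using congrFun h0 i.succ)
      simp [lin g hg1, h00, this]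
    · rw [Fin.sum_univ_succ]
      simp only [Fin.cons_zero, Fin.cons_succ, mul_one, sub_mul, Finset.sum_sub_distrib, mul_assoc,
        ← Finset.mul_sum]
      rw [lin g hg1, lin f hf1] at hζ
      linear_combination hζ
  · obtain ⟨φ, hφX, hφ⟩ := exists_ratFunc_hom halg
    set M : Matrix (Fin (n + 1)) (Fin (n + 1)) (RatFunc ℂ) := Matrix.of fun i j =>
          (RatFunc.X : RatFunc ℂ) ^ 2 * algebraMap ℂ (RatFunc ℂ) (homogMat g i j) -
            algebraMap ℂ (RatFunc ℂ) (homogMat f i j) with hM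
    have hMsymm : ∀ i j, M i j = M j i := fun i j => by
      simp only [hM, Matrix.of_apply, homogMat_symm f i j, homogMat_symm g i j]
    obtain ⟨v, hvv, hv0⟩ := exists_isotropic M hMsymm hrank
    refine generators_of_quadric x ζ (fun i j => φ (M i j)) (fun i j => hφ _)
      (fun i j => by rw [hMsymm]) (fun j => φ (v j)) (fun j => hφ _) ?_ ?_ ?_
    · simpa using congrArg φ hvv
    · intro h0
      apply hv0
      funext i
      apply φ.injective
      have := congrFun h0 i
      simpa [Matrix.mulVec, dotProduct] using this
    · have hMφ : ∀ i j, φ (M i j) = ζ ^ 2 * algebraMap ℂ N (homogMat g i j) -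
          algebraMap ℂ N (homogMat f i j) := fun i j => by
        simp only [hM, Matrix.of_apply, map_sub, map_mul, map_pow, hφX, AlgHom.commutes]
      simp only [hMφ, sub_mul, Finset.sum_sub_distrib, mul_assoc, ← Finset.mul_sum]
      simp only [aeval_eq_homogMat x _ hf2, aeval_eq_homogMat x _ hg2, mul_assoc] at hζ
      linear_combination hζ

/-! ### The function field of the quadric -/

lemma aeval_eq_algebraMap {n : ℕ} {N : Type} [Field N] [Algebra ℂ N] [Algebra (RatFF n) N]
    [IsScalarTower ℂ (RatFF n) N] (p : MvPolynomial (Fin n) ℂ) :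
    aeval (fun i => algebraMap (RatFF n) N
      (algebraMap (MvPolynomial (Fin n) ℂ) (RatFF n) (X i))) p =
      algebraMap (RatFF n) N (algebraMap (MvPolynomial (Fin n) ℂ) (RatFF n) p) := by
  have : aeval (fun i => algebraMap (RatFF n) N
      (algebraMap (MvPolynomial (Fin n) ℂ) (RatFF n) (X i))) =
      (IsScalarTower.toAlgHom ℂ (RatFF n) N).comp
        (IsScalarTower.toAlgHom ℂ (MvPolynomial (Fin n) ℂ) (RatFF n)) := by
    ext i; simp
  rw [this]; rfl

lemma algebraMap_ratFF_mem {n : ℕ} {N : Type} [Field N] [Algebra ℂ N] [Algebra (RatFF n) N]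
    [IsScalarTower ℂ (RatFF n) N] (S : IntermediateField ℂ N)
    (hS : ∀ i, algebraMap (RatFF n) N (algebraMap (MvPolynomial (Fin n) ℂ) (RatFF n) (X i)) ∈ S)
    (k : RatFF n) : algebraMap (RatFF n) N k ∈ S := by
  have hp : ∀ p : MvPolynomial (Fin n) ℂ,
      algebraMap (RatFF n) N (algebraMap (MvPolynomial (Fin n) ℂ) (RatFF n) p) ∈ S := by
    intro p
    rw [← aeval_eq_algebraMap]
    have hle : Algebra.adjoin ℂ (Set.range fun i => algebraMap (RatFF n) N
        (algebraMap (MvPolynomial (Fin n) ℂ) (RatFF n) (X i))) ≤ S.toSubalgebra := by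
      rw [Algebra.adjoin_le_iff]
      rintro _ ⟨i, rfl⟩
      exact hS i
    rw [Algebra.adjoin_range_eq_range_aeval] at hle
    exact hle ⟨p, rfl⟩
  obtain ⟨p, q, -, rfl⟩ := IsFractionRing.div_surjective (A := MvPolynomial (Fin n) ℂ) k
  rw [map_div₀]
  exact div_mem (hp p) (hp q)

/-- A field generated over `K = ℂ(x₁,…,xₙ)` by a point `z` of the quadric and a square root `ζ` of
`a₁` is generated over `ℂ` by `n + r - 1` elements. -/
lemma exists_generators {n r : ℕ} {N : Type} [Field N] [Algebra ℂ N] [Algebra (RatFF n) N]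
    [IsScalarTower ℂ (RatFF n) N] (hr : 0 < r)
    (a : Fin r → RatFF n) (ha : a ⟨0, hr⟩ ≠ 0)
    (f g : MvPolynomial (Fin n) ℂ) (hg : g ≠ 0)
    (hfg : a ⟨0, hr⟩ =
      algebraMap (MvPolynomial (Fin n) ℂ) (RatFF n) f /
        algebraMap (MvPolynomial (Fin n) ℂ) (RatFF n) g)
    (hcase :
      (f.totalDegree ≤ 1 ∧ g.totalDegree ≤ 1) ∨
      (f.totalDegree ≤ 2 ∧ g.totalDegree ≤ 2 ∧
        3 ≤ Matrix.rank (Matrix.of fun i j =>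
          (RatFunc.X : RatFunc ℂ) ^ 2 * algebraMap ℂ (RatFunc ℂ) (homogMat g i j) -
            algebraMap ℂ (RatFunc ℂ) (homogMat f i j))))
    (z : Fin r → N) (hz : 1 + ∑ i, algebraMap (RatFF n) N (a i) * z i ^ 2 = 0)
    (ζ : N) (hζ : ζ ^ 2 = algebraMap (RatFF n) N (a ⟨0, hr⟩))
    (hgen : ∀ S : IntermediateField ℂ N, (∀ k, algebraMap (RatFF n) N k ∈ S) →
      (∀ i, z i ∈ S) → ζ ∈ S → S = ⊤) :
    ∃ w : Fin (n + r - 1) → N, IntermediateField.adjoin ℂ (Set.range w) = ⊤ := by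
  obtain ⟨r, rfl⟩ : ∃ r', r = r' + 1 := ⟨r - 1, by omega⟩
  change ∃ w : Fin (n + r) → N, _
  have hg' : algebraMap (RatFF n) N (algebraMap (MvPolynomial (Fin n) ℂ) (RatFF n) g) ≠ 0 := by
    rw [map_ne_zero]
    exact (map_ne_zero_iff _ (IsFractionRing.injective _ _)).mpr hg
  obtain ⟨y, hyζ, hyx⟩ := generators_of_sqrt (fun i => algebraMap (RatFF n) N
      (algebraMap (MvPolynomial (Fin n) ℂ) (RatFF n) (X i))) ζ f g
    (by rwa [aeval_eq_algebraMap])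
    (by rw [aeval_eq_algebraMap, aeval_eq_algebraMap, hζ, hfg, map_div₀, div_mul_cancel₀ _ hg'])
    hcase
  have ha' : algebraMap (RatFF n) N (a 0) ≠ 0 := (map_ne_zero _).mpr ha
  have h2 : (2 : N) ≠ 0 := by
    rw [← map_ofNat (algebraMap ℂ N) 2]
    exact (map_ne_zero _).mpr two_ne_zero
  -- a square root of `-a₁`, with the sign chosen so that `u = 1 + η z₁` is nonzero
  have hη : ∃ η : N, η ^ 2 = -algebraMap (RatFF n) N (a 0) ∧ 1 + η * z 0 ≠ 0 ∧
      η ∈ IntermediateField.adjoin ℂ (Set.range y) := by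
    have hI : algebraMap ℂ N Complex.I ^ 2 = -1 := by
      rw [← map_pow, Complex.I_sq, map_neg, map_one]
    have hsq : (algebraMap ℂ N Complex.I * ζ) ^ 2 = -algebraMap (RatFF n) N (a 0) := by
      rw [mul_pow, hI, hζ]; simp
    have hmem : algebraMap ℂ N Complex.I * ζ ∈ IntermediateField.adjoin ℂ (Set.range y) :=
      mul_mem (IntermediateField.algebraMap_mem _ _) hyζ
    by_cases h : 1 + (algebraMap ℂ N Complex.I * ζ) * z 0 = 0
    · refine ⟨-(algebraMap ℂ N Complex.I * ζ), by rw [neg_sq, hsq], fun h' => h2 ?_, neg_mem hmem⟩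
      linear_combination h + h'
    · exact ⟨_, hsq, h, hmem⟩
  obtain ⟨η, hη2, hu, hηy⟩ := hη
  set u := 1 + η * z 0 with hudef
  have hη0 : η ≠ 0 := by
    rintro rfl
    apply ha'
    linear_combination hη2
  set t : Fin r → N := fun i => z i.succ / u with ht
  refine ⟨Fin.append y t, ?_⟩
  set S := IntermediateField.adjoin ℂ (Set.range (Fin.append y t)) with hS
  have hwS : ∀ i, Fin.append y t i ∈ S := fun i => IntermediateField.subset_adjoin _ _ ⟨i, rfl⟩
  have hle : IntermediateField.adjoin ℂ (Set.range y) ≤ S := by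
    rw [IntermediateField.adjoin_le_iff]
    rintro _ ⟨i, rfl⟩
    simpa using hwS (Fin.castAdd r i)
  have htS : ∀ i, t i ∈ S := fun i => by simpa using hwS (Fin.natAdd n i)
  have hK : ∀ k, algebraMap (RatFF n) N k ∈ S := algebraMap_ratFF_mem S fun i => hle (hyx i)
  set T := ∑ i : Fin r, algebraMap (RatFF n) N (a i.succ) * t i ^ 2 with hT
  have hTS : T ∈ S := sum_mem fun i _ => mul_mem (hK _) (pow_mem (htS i) 2)
  have hTu : T * u ^ 2 = ∑ i : Fin r, algebraMap (RatFF n) N (a i.succ) * z i.succ ^ 2 := by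
    rw [hT, Finset.sum_mul]
    refine Finset.sum_congr rfl fun i _ => ?_
    simp only [ht]; field_simp
  have huT : u * (1 - T) = 2 := by
    rw [Fin.sum_univ_succ, ← hTu] at hz
    have : u * (u * (1 - T) - 2) = 0 := by
      have e : u * (2 - u) = 1 + algebraMap (RatFF n) N (a 0) * z 0 ^ 2 := by
        rw [hudef]; linear_combination (-z 0 ^ 2) * hη2
      linear_combination -e - hz
    linear_combination (mul_eq_zero.mp this).resolve_left hu
  have hT1 : 1 - T ≠ 0 := by
    intro h
    rw [h, mul_zero] at huT
    exact h2 huT.symm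
  have huS : u ∈ S := by
    rw [eq_div_of_mul_eq hT1 huT]
    exact div_mem (ofNat_mem S 2) (sub_mem (one_mem S) hTS)
  refine hgen S hK (fun i => ?_) (hle hyζ)
  refine Fin.cases ?_ (fun i => ?_) i
  · have : z 0 = (u - 1) / η := by rw [hudef]; field_simp; ring
    rw [this]
    exact div_mem (sub_mem huS (one_mem S)) (hle hηy)
  · have : z i.succ = t i * u := by simp only [ht]; field_simp
    rw [this]
    exact mul_mem (htS i) huS

/-- The quadratic extension, for a field `F` presented abstractly by the properties of the function
field of the quadric that matter: it is generated over `K` by a point `z` of the quadric, and the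
coordinates other than the first are algebraically independent over `K`. -/
lemma function_field_case {n r : ℕ} {F : Type} [Field F] [Algebra ℂ F] [Algebra (RatFF n) F]
    [IsScalarTower ℂ (RatFF n) F] (hn : 2 ≤ n) (hr : 0 < r)
    (a : Fin r → RatFF n) (ha : a ⟨0, hr⟩ ≠ 0)
    (f g : MvPolynomial (Fin n) ℂ) (hg : g ≠ 0)
    (hfg : a ⟨0, hr⟩ =
      algebraMap (MvPolynomial (Fin n) ℂ) (RatFF n) f /
        algebraMap (MvPolynomial (Fin n) ℂ) (RatFF n) g)
    (hcase :
      (f.totalDegree ≤ 1 ∧ g.totalDegree ≤ 1) ∨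
      (f.totalDegree ≤ 2 ∧ g.totalDegree ≤ 2 ∧
        3 ≤ Matrix.rank (Matrix.of fun i j =>
          (RatFunc.X : RatFunc ℂ) ^ 2 * algebraMap ℂ (RatFunc ℂ) (homogMat g i j) -
            algebraMap ℂ (RatFunc ℂ) (homogMat f i j))))
    (z : Fin r → F) (hz : 1 + ∑ i, algebraMap (RatFF n) F (a i) * z i ^ 2 = 0)
    (hind : AlgebraicIndependent (RatFF n) fun i : {i : Fin r // i ≠ ⟨0, hr⟩} => z i)
    (hgen : ∀ S : IntermediateField ℂ F, (∀ k, algebraMap (RatFF n) F k ∈ S) →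
      (∀ i, z i ∈ S) → S = ⊤) :
    ∃ α : F, Nonempty (AdjoinRoot (Polynomial.X ^ 2 - Polynomial.C α) ≃ₐ[ℂ] RatFF (n + r - 1)) := by
  have hX : AlgebraicIndependent ℂ fun i : Fin n =>
      algebraMap (MvPolynomial (Fin n) ℂ) (RatFF n) (X i) :=
    (algebraicIndependent_X (Fin n) ℂ).map' (f := IsScalarTower.toAlgHom ℂ _ (RatFF n))
      (IsFractionRing.injective _ _)
  have hall := hX.sumElim_comp hind
  have hcard : n + r - 1 ≤ Fintype.card ({i : Fin r // i ≠ ⟨0, hr⟩} ⊕ Fin n) := by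
    simp [Fintype.card_subtype_compl]
    omega
  by_cases hsq : IsSquare (algebraMap (RatFF n) F (a ⟨0, hr⟩))
  · obtain ⟨ζ, hζ⟩ := hsq
    obtain ⟨w, hw⟩ := exists_generators hr a ha f g hg hfg hcase z hz ζ (by rw [hζ, sq])
      (fun S h1 h2 _ => hgen S h1 h2)
    exact exists_sqrt_generator (by omega) _ hall hcard w hw
  · refine ⟨_, exists_adjoinRoot_equiv hsq _ hall hcard ?_⟩
    intro N _ _ _ _ ζ hζ htop
    let _ : Algebra (RatFF n) N := ((algebraMap F N).comp (algebraMap (RatFF n) F)).toAlgebra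
    have hmap : ∀ k, algebraMap (RatFF n) N k = algebraMap F N (algebraMap (RatFF n) F k) :=
      fun _ => rfl
    have : IsScalarTower ℂ (RatFF n) N := IsScalarTower.of_algebraMap_eq fun c => by
      rw [hmap, ← IsScalarTower.algebraMap_apply ℂ (RatFF n) F,
        ← IsScalarTower.algebraMap_apply ℂ F N]
    refine exists_generators hr a ha f g hg hfg hcase (fun i => algebraMap F N (z i)) ?_ ζ hζ ?_
    · simpa [hmap] using congrArg (algebraMap F N) hz
    · intro S h1 h2 h3
      have hcomap := hgen (S.comap (IsScalarTower.toAlgHom ℂ F N)) h1 h2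
      have hF : ∀ u : F, algebraMap F N u ∈ S := fun u => by
        have : u ∈ S.comap (IsScalarTower.toAlgHom ℂ F N) := hcomap ▸ IntermediateField.mem_top
        exact this
      rw [eq_top_iff]
      intro u _
      have hu : u ∈ Algebra.adjoin F {ζ} := htop ▸ Algebra.mem_top
      induction hu using Algebra.adjoin_induction with
      | mem x hx => rw [Set.mem_singleton_iff.mp hx]; exact h3
      | algebraMap r => exact hF r
      | add x y _ _ h1 h2 => exact add_mem (h1 trivial) (h2 trivial)
      | mul x y _ _ h1 h2 => exact mul_mem (h1 trivial) (h2 trivial)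

lemma degreeOf_quadric {K : Type} [Field K] {r : ℕ} (a : Fin r → K) (i₀ : Fin r) (ha : a i₀ ≠ 0) :
    2 ≤ degreeOf i₀ ((1 : MvPolynomial (Fin r) K) + ∑ i, C (a i) * X i ^ 2) := by
  classical
  have hc : coeff (Finsupp.single i₀ 2) ((1 : MvPolynomial (Fin r) K) + ∑ i, C (a i) * X i ^ 2) =
      a i₀ := by
    have h1 : (0 : Fin r →₀ ℕ) ≠ Finsupp.single i₀ 2 := fun h => by
      simpa using DFunLike.congr_fun h i₀
    rw [coeff_add, coeff_one, if_neg h1, zero_add, coeff_sum, Finset.sum_eq_single i₀]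
    · rw [coeff_C_mul, coeff_X_pow]; simp
    · intro j _ hj
      rw [coeff_C_mul, coeff_X_pow, if_neg, mul_zero]
      intro h
      exact hj ((Finsupp.single_left_inj two_ne_zero).mp h)
    · simp
  have := monomial_le_degreeOf i₀ (mem_support_iff.mpr (hc ▸ ha))
  simpa using this

/-- On the affine quadric `1 + ∑ aᵢ zᵢ² = 0` the coordinates `zᵢ` with `i ≠ i₀` are algebraically
independent: a nonzero multiple of the equation has positive degree in `z_{i₀}`. -/
lemma algebraicIndependent_quotient {K : Type} [Field K] {r : ℕ} (a : Fin r → K) (i₀ : Fin r)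
    (ha : a i₀ ≠ 0) :
    AlgebraicIndependent K fun i : {i : Fin r // i ≠ i₀} =>
      Ideal.Quotient.mk (Ideal.span {(1 : MvPolynomial (Fin r) K) + ∑ i, C (a i) * X i ^ 2})
        (X (i : Fin r)) := by
  rw [algebraicIndependent_iff]
  intro p hp
  have h1 : aeval (fun i : {i : Fin r // i ≠ i₀} =>
      Ideal.Quotient.mk (Ideal.span {(1 : MvPolynomial (Fin r) K) + ∑ i, C (a i) * X i ^ 2})
        (X (i : Fin r))) p = Ideal.Quotient.mk _ (rename Subtype.val p) := by
    have : aeval (fun i : {i : Fin r // i ≠ i₀} =>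
      Ideal.Quotient.mk (Ideal.span {(1 : MvPolynomial (Fin r) K) + ∑ i, C (a i) * X i ^ 2})
        (X (i : Fin r))) = (Ideal.Quotient.mkₐ K _).comp (rename Subtype.val) := by
      ext i; simp
    rw [this]; rfl
  rw [h1, Ideal.Quotient.eq_zero_iff_mem, Ideal.mem_span_singleton] at hp
  obtain ⟨h, hh⟩ := hp
  have hq := degreeOf_quadric a i₀ ha
  have hq0 : (1 : MvPolynomial (Fin r) K) + ∑ i, C (a i) * X i ^ 2 ≠ 0 := by
    intro h0; rw [h0] at hq; simp at hq
  by_cases hzero : h = 0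
  · rw [hzero, mul_zero] at hh
    exact rename_injective _ Subtype.val_injective (by rw [hh, map_zero])
  · exfalso
    have e := congrArg (degreeOf i₀) hh
    rw [degreeOf_mul_eq hq0 hzero] at e
    have : degreeOf i₀ (rename (Subtype.val : {i : Fin r // i ≠ i₀} → Fin r) p) = 0 := by
      by_contra hne
      have hmem : i₀ ∈ (rename (Subtype.val : {i : Fin r // i ≠ i₀} → Fin r) p).vars := by
        rwa [mem_vars_iff_degreeOf_ne_zero]
      obtain ⟨j, -, hj⟩ := mem_vars_rename _ _ hmem
      exact j.2 hj
    omega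

/-- **Lemma 3.2 (Schreieder, after Colliot-Thélène–Ojanguren).**
Let `n ≥ 2`, let `K = ℂ(x₁,…,xₙ)` be the function field of `ℙⁿ` and let
`q = ⟨1, a₁, …, a_r⟩` be a quadratic form over `K` with all `a_i ∈ K^*`, defining an
integral projective quadric hypersurface `Q ⊂ ℙ^r_K`.  Suppose `a₁ = f/g` with
`f, g ∈ ℂ[x₁,…,xₙ]` satisfying one of:
(1) `f` and `g` are linear; or
(2) `f` and `g` have degree at most two, and the homogenization of `g z² - f` over
`L = ℂ(z)` is a quadratic form of rank `≥ 3` over `L`.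
Then `Q` is unirational over `ℂ`; more precisely, some degree two extension of the
function field `K(Q)` is purely transcendental over `ℂ`. -/
theorem quadric_with_special_first_coefficient_unirational
    (n r : ℕ) (hn : 2 ≤ n) (hr : 0 < r)
    (a : Fin r → RatFF n) (ha : ∀ i, a i ≠ 0)
    (f g : MvPolynomial (Fin n) ℂ) (hg : g ≠ 0)
    (hfg : a ⟨0, hr⟩ =
      algebraMap (MvPolynomial (Fin n) ℂ) (RatFF n) f /
        algebraMap (MvPolynomial (Fin n) ℂ) (RatFF n) g)
    (hcase :
      (f.totalDegree ≤ 1 ∧ g.totalDegree ≤ 1) ∨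
      (f.totalDegree ≤ 2 ∧ g.totalDegree ≤ 2 ∧
        3 ≤ Matrix.rank (Matrix.of fun i j =>
          (RatFunc.X : RatFunc ℂ) ^ 2 * algebraMap ℂ (RatFunc ℂ) (homogMat g i j) -
            algebraMap ℂ (RatFunc ℂ) (homogMat f i j))))
    (hQ : IsDomain (quadricChartRing n r a)) :
    (∃ d : ℕ, Nonempty (FractionRing (quadricChartRing n r a) →ₐ[ℂ] RatFF d)) ∧
      ∃ α : FractionRing (quadricChartRing n r a),
        Nonempty (AdjoinRoot (Polynomial.X ^ 2 - Polynomial.C α) ≃ₐ[ℂ] RatFF (n + r - 1)) := by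
  suffices hmain : ∃ α : FractionRing (quadricChartRing n r a),
      Nonempty (AdjoinRoot (Polynomial.X ^ 2 - Polynomial.C α) ≃ₐ[ℂ] RatFF (n + r - 1)) by
    refine ⟨?_, hmain⟩
    obtain ⟨α, ⟨e⟩⟩ := hmain
    exact ⟨_, ⟨e.toAlgHom.comp (IsScalarTower.toAlgHom ℂ _ _)⟩⟩
  -- `quadricChartRing` is a plain `def`, so its `K`-algebra structure has to be transported by hand.
  let _ : Algebra (RatFF n) (quadricChartRing n r a) :=
    inferInstanceAs (Algebra (RatFF n) (MvPolynomial (Fin r) (RatFF n) ⧸ Ideal.span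
      {(1 : MvPolynomial (Fin r) (RatFF n)) + ∑ i, C (a i) * X i ^ 2}))
  have : IsScalarTower ℂ (RatFF n) (quadricChartRing n r a) :=
    inferInstanceAs (IsScalarTower ℂ (RatFF n) (MvPolynomial (Fin r) (RatFF n) ⧸ Ideal.span
      {(1 : MvPolynomial (Fin r) (RatFF n)) + ∑ i, C (a i) * X i ^ 2}))
  let π : MvPolynomial (Fin r) (RatFF n) →ₐ[RatFF n] quadricChartRing n r a :=
    Ideal.Quotient.mkₐ (RatFF n) (Ideal.span
      {(1 : MvPolynomial (Fin r) (RatFF n)) + ∑ i, C (a i) * X i ^ 2})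
  have hπ : Function.Surjective π := Ideal.Quotient.mk_surjective
  have hπ0 : π (1 + ∑ i, C (a i) * X i ^ 2) = 0 :=
    Ideal.Quotient.eq_zero_iff_mem.mpr (Ideal.mem_span_singleton_self _)
  let ι : quadricChartRing n r a →ₐ[RatFF n] FractionRing (quadricChartRing n r a) :=
    IsScalarTower.toAlgHom (RatFF n) _ _
  have hι : Function.Injective ι := IsFractionRing.injective _ _
  have hC : ∀ k, ι (π (C k)) = algebraMap (RatFF n) _ k := fun k =>
    (ι.comp π).commutes k
  refine function_field_case hn hr a (ha _) f g hg hfg hcase (fun i => ι (π (X i))) ?_ ?_ ?_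
  · have := congrArg ι hπ0
    simpa only [map_add, map_one, map_sum, map_mul, map_pow, hC, map_zero] using this
  · exact (algebraicIndependent_quotient a ⟨0, hr⟩ (ha _)).map' (f := ι) hι
  · intro S h1 h2
    have hp : ∀ p, ι (π p) ∈ S := by
      intro p
      induction p using MvPolynomial.induction_on with
      | C k => rw [hC]; exact h1 k
      | add p q hp hq => rw [map_add, map_add]; exact add_mem hp hq
      | mul_X p i hp => rw [map_mul, map_mul]; exact mul_mem hp (h2 i)
    rw [eq_top_iff]
    intro u _
    obtain ⟨p, q, -, rfl⟩ := IsFractionRing.div_surjective (A := quadricChartRing n r a) u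
    obtain ⟨p, rfl⟩ := hπ p
    obtain ⟨q, rfl⟩ := hπ q
    exact div_mem (hp p) (hp q)
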